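/- If n > d, then the Sobolev orthogonal polynomial S_n has at least n − d changes of sign on (−1,1), where d = N + Σ_{j=1}^N d_j is the degree of ρ. -/

import Mathlib

open MeasureTheory Polynomial Filter
open scoped Classical

noncomputable section

/-- The discrete Sobolev inner product with a single derivative order `d j` at each
mass point `c j`, with weight `η j`. -/
def sobInner (μ : Measure ℝ) {N : ℕ} (c : Fin N → ℝ) (d : Fin N → ℕ) (η : Fin N → ℝ)
    (f g : Polynomial ℝ) : ℝ :=
  (∫ x in Set.Icc (-1:ℝ) 1, f.eval x * g.eval x ∂μ) +
    ∑ j, η j * ((derivative^[d j] f).eval (c j)) * ((derivative^[d j] g).eval (c j))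

/-- The general discrete Sobolev inner product with weights `η j i` for the `i`-th
derivatives, `0 ≤ i ≤ d j`, at each mass point `c j`. -/
def sobInner2 (μ : Measure ℝ) {N : ℕ} (c : Fin N → ℝ) (d : Fin N → ℕ) (η : Fin N → ℕ → ℝ)
    (f g : Polynomial ℝ) : ℝ :=
  (∫ x in Set.Icc (-1:ℝ) 1, f.eval x * g.eval x ∂μ) +
    ∑ j, ∑ i ∈ Finset.range (d j + 1),
      η j i * ((derivative^[i] f).eval (c j)) * ((derivative^[i] g).eval (c j))

/-- Sequential order for the data of a discrete Sobolev inner product: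
`d` is nondecreasing and each `c k` lies outside the convex hull of
`(-1,1) ∪ {c 1, …, c (k-1)}`. -/
def SeqOrdered {N : ℕ} (c : Fin N → ℝ) (d : Fin N → ℕ) : Prop :=
  (∀ i j : Fin N, i ≤ j → d i ≤ d j) ∧
    ∀ k : Fin N, c k ∉ convexHull ℝ (Set.Ioo (-1:ℝ) 1 ∪ c '' {j : Fin N | j < k})

/-- The polynomial ρ(x) = ∏_{c j < -1} (x - c j)^(d j + 1) · ∏_{c j > 1} (c j - x)^(d j + 1). -/
def rhoPoly {N : ℕ} (c : Fin N → ℝ) (d : Fin N → ℕ) : Polynomial ℝ :=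
  (∏ j ∈ Finset.univ.filter (fun j => c j < -1), (X - C (c j)) ^ (d j + 1)) *
    ∏ j ∈ Finset.univ.filter (fun j => (1:ℝ) < c j), (C (c j) - X) ^ (d j + 1)

/-- ν = number of mass points greater than 1. -/
def nuCount {N : ℕ} (c : Fin N → ℝ) : ℕ :=
  (Finset.univ.filter (fun j : Fin N => (1:ℝ) < c j)).card

/-- μ belongs to the Nevai class M(0,1): supp μ = [-1,1] and the monic orthogonal
polynomials of μ satisfy a three-term recurrence with aₙ → 1/2 and bₙ → 0. -/
def NevaiClass (μ : Measure ℝ) : Prop :=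
  μ (Set.Icc (-1:ℝ) 1)ᶜ = 0 ∧
  (∀ x ∈ Set.Icc (-1:ℝ) 1, ∀ ε > 0, 0 < μ (Metric.ball x ε)) ∧
  ∃ (P : ℕ → Polynomial ℝ) (a b : ℕ → ℝ),
    (∀ n, (P n).Monic) ∧ (∀ n, (P n).natDegree = n) ∧
    (∀ n, ∀ m < n, (∫ x in Set.Icc (-1:ℝ) 1, x ^ m * (P n).eval x ∂μ) = 0) ∧
    P 0 = 1 ∧ P 1 = X - C (b 0) ∧
    (∀ n, P (n + 2) = (X - C (b (n + 1))) * P (n + 1) - C ((a (n + 1)) ^ 2) * P n) ∧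
    Tendsto a atTop (nhds (1 / 2)) ∧ Tendsto b atTop (nhds 0)

/-- The segment [-1,1] regarded as a subset of ℂ. -/
def segIcc : Set ℂ := Complex.ofReal '' Set.Icc (-1:ℝ) 1

/-- Markov-type function: z ↦ ∫ q(x) / (z - x) w(x) dμ(x). -/
def markovHat (μ : Measure ℝ) (w q : Polynomial ℝ) (z : ℂ) : ℂ :=
  ∫ x in Set.Icc (-1:ℝ) 1, ((q.eval x * w.eval x : ℝ) : ℂ) / (z - (x : ℂ)) ∂μ

/-- Associated function: z ↦ ∫ (p(z) - p(x)) / (z - x) · q(x) w(x) dμ(x). -/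
def assocFun (μ : Measure ℝ) (w q p : Polynomial ℝ) (z : ℂ) : ℂ :=
  ∫ x in Set.Icc (-1:ℝ) 1,
    ((aeval z p - ((p.eval x : ℝ) : ℂ)) / (z - (x : ℂ))) * ((q.eval x * w.eval x : ℝ) : ℂ) ∂μ

/-- A function changes sign at `t` if arbitrarily close to `t`, on the left and right,
it takes values of opposite signs. -/
def SignChangeAt (p : Polynomial ℝ) (t : ℝ) : Prop :=
  ∀ δ > 0, ∃ x ∈ Set.Ioo (t - δ) t, ∃ y ∈ Set.Ioo t (t + δ), p.eval x * p.eval y < 0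

/-- N₀(f; A): number of zeros of `f` in `A`, counted with multiplicity. -/
def N0 (f : Polynomial ℝ) (A : Set ℝ) : ℕ :=
  (f.roots.filter (fun x => x ∈ A)).card

/-!
If `ρ` vanishes at each `c j` to order `d j + 1`, then `f ↦ ⟨ρ f, S n⟩` has no discrete part, so
`ρ * S n` is orthogonal with respect to `μ` to all polynomials of degree less than `n - deg ρ`.
By the classical argument, `ρ * S n` then has at least `n - deg ρ` zeros of odd multiplicity in
`(-1, 1)`: otherwise multiplying it by `∏ (X - t)` over those zeros `t` would give a nonzero
polynomial of constant sign on `[-1, 1]` whose integral vanishes. As `ρ` has no zeros in `(-1, 1)`,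
these are zeros of odd multiplicity of `S n`, where `S n` changes sign.
-/

section Roots

variable {R : Type*} [CommRing R] [IsDomain R] {p q : R[X]} {s : Set R} {t : R}

theorem exists_eq_prod_roots_filter_mul (hp : p ≠ 0) (s : Set R) :
    ∃ q : R[X], p = ((p.roots.filter (· ∈ s)).map fun t => X - C t).prod * q ∧
      ∀ t ∈ s, ¬ q.IsRoot t := by
  obtain ⟨q, hpq⟩ := (Multiset.prod_X_sub_C_dvd_iff_le_roots hp _).2
    (Multiset.filter_le (· ∈ s) p.roots)
  refine ⟨q, hpq, fun t ht hqt => ?_⟩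
  have hroots : p.roots = p.roots.filter (· ∈ s) + q.roots := by
    conv_lhs => rw [hpq, roots_mul (hpq ▸ hp), roots_multiset_prod_X_sub_C]
  have hcount := congrArg (Multiset.count t) hroots
  rw [Multiset.count_add, Multiset.count_filter_of_pos ht, left_eq_add,
    Multiset.count_eq_zero] at hcount
  exact hcount ((mem_roots (right_ne_zero_of_mul (hpq ▸ hp))).2 hqt)

/-- The roots of `p` in `s` of odd multiplicity, which for real `p` are the points of `s` where `p`
changes sign. It is empty for `p = 0`. -/
def oddRoots (p : R[X]) (s : Set R) : Finset R :=
  {t ∈ p.roots.toFinset | t ∈ s ∧ Odd (p.rootMultiplicity t)}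

theorem mem_oddRoots : t ∈ oddRoots p s ↔ t ∈ s ∧ Odd (p.rootMultiplicity t) := by
  rw [oddRoots, Finset.mem_filter, Multiset.mem_toFinset, ← Multiset.count_pos, count_roots]
  exact and_iff_right_of_imp fun h => h.2.pos

theorem oddRoots_mul_of_forall_not_isRoot (hp : p ≠ 0) (hq : ∀ t ∈ s, ¬ q.IsRoot t) :
    oddRoots (q * p) s = oddRoots p s := by
  ext t
  simp only [mem_oddRoots]
  refine and_congr_right fun ht => ?_
  have hq0 : q ≠ 0 := by
    rintro rfl
    exact hq t ht eval_zero
  rw [rootMultiplicity_mul (mul_ne_zero hq0 hp), rootMultiplicity_eq_zero (hq t ht), zero_add]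

theorem even_rootMultiplicity_prod_oddRoots_mul (hp : p ≠ 0) (ht : t ∈ s) :
    Even (((∏ u ∈ oddRoots p s, (X - C u)) * p).rootMultiplicity t) := by
  have hprod : (∏ u ∈ oddRoots p s, (X - C u)) ≠ 0 := (monic_prod_X_sub_C _ _).ne_zero
  rw [rootMultiplicity_mul (mul_ne_zero hprod hp), ← count_roots (∏ u ∈ oddRoots p s, (X - C u)),
    roots_prod_X_sub_C, Multiset.count_eq_of_nodup (oddRoots p s).nodup]
  split_ifs with hmem
  · exact odd_one.add_odd (mem_oddRoots.1 hmem).2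
  · rw [zero_add, ← Nat.not_odd_iff_even]
    exact fun hodd => hmem (mem_oddRoots.2 ⟨ht, hodd⟩)

end Roots

section Sign

variable {p : ℝ[X]} {s : Set ℝ} {t : ℝ}

theorem signChangeAt_of_odd_rootMultiplicity (hodd : Odd (p.rootMultiplicity t)) :
    SignChangeAt p t := by
  intro δ hδ
  have hp : p ≠ 0 := by
    rintro rfl
    simp at hodd
  obtain ⟨q, hpq, hdvd⟩ := exists_eq_pow_rootMultiplicity_mul_and_not_dvd p hp t
  set m := p.rootMultiplicity t
  have hqt : q.eval t ≠ 0 := fun h => hdvd (dvd_iff_isRoot.2 h)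
  have hq_pos : ∀ᶠ e in nhds (0 : ℝ), 0 < q.eval (t - e) * q.eval (t + e) := by
    have hcont : Continuous fun e : ℝ => q.eval (t - e) * q.eval (t + e) := by fun_prop
    exact hcont.continuousAt.eventually_const_lt (by simpa using mul_self_pos.2 hqt)
  obtain ⟨e, hqe, he_pos, he_lt⟩ :=
    ((hq_pos.filter_mono nhdsWithin_le_nhds).and (Ioo_mem_nhdsGT hδ)).exists
  refine ⟨t - e, ⟨by linarith, by linarith⟩, t + e, ⟨by linarith, by linarith⟩, ?_⟩
  calc p.eval (t - e) * p.eval (t + e)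
      = (-e) ^ m * e ^ m * (q.eval (t - e) * q.eval (t + e)) := by
        rw [hpq]
        simp only [eval_mul, eval_pow, eval_sub, eval_X, eval_C, sub_sub_cancel_left,
          add_sub_cancel_left]
        ring
    _ < 0 := mul_neg_of_neg_of_pos
        (mul_neg_of_neg_of_pos (hodd.pow_neg (neg_neg_of_pos he_pos)) (pow_pos he_pos m)) hqe

theorem eval_prod_X_sub_C_nonneg_of_even_count {M : Multiset ℝ} (hM : ∀ t ∈ M, Even (M.count t))
    (x : ℝ) : 0 ≤ ((M.map fun t => X - C t).prod).eval x := by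
  rw [Finset.prod_multiset_map_count, eval_prod]
  refine Finset.prod_nonneg fun t ht => ?_
  rw [eval_pow]
  exact (hM t (Multiset.mem_toFinset.1 ht)).pow_nonneg _

theorem eval_nonneg_or_nonpos_of_even_rootMultiplicity (hs : IsPreconnected s)
    (heven : ∀ t ∈ s, Even (p.rootMultiplicity t)) :
    (∀ x ∈ s, 0 ≤ p.eval x) ∨ ∀ x ∈ s, p.eval x ≤ 0 := by
  rcases eq_or_ne p 0 with rfl | hp
  · simp
  by_contra! ⟨⟨x, hx, hpx⟩, y, hy, hpy⟩
  obtain ⟨q, hpq, hq⟩ := exists_eq_prod_roots_filter_mul hp s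
  have hprod := eval_prod_X_sub_C_nonneg_of_even_count (M := p.roots.filter (· ∈ s))
    fun t ht => by
      have hts := Multiset.of_mem_filter ht
      rw [Multiset.count_filter_of_pos (p := (· ∈ s)) hts, count_roots]
      exact heven t hts
  rw [hpq, eval_mul] at hpx hpy
  have hqx : q.eval x < 0 := neg_of_mul_neg_right hpx (hprod x)
  have hqy : 0 < q.eval y := pos_of_mul_pos_right hpy (hprod y)
  obtain ⟨z, hz, hqz⟩ := hs.intermediate_value hx hy q.continuous.continuousOn ⟨hqx.le, hqy.le⟩
  exact hq z hz hqz

theorem eval_nonneg_or_nonpos_closure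
    (hsign : (∀ x ∈ s, 0 ≤ p.eval x) ∨ ∀ x ∈ s, p.eval x ≤ 0) :
    (∀ x ∈ closure s, 0 ≤ p.eval x) ∨ ∀ x ∈ closure s, p.eval x ≤ 0 :=
  hsign.imp
    (fun h => closure_minimal h (isClosed_le continuous_const p.continuous))
    (fun h => closure_minimal h (isClosed_le p.continuous continuous_const))

end Sign

section Orthogonality

variable {μ : Measure ℝ} [IsFiniteMeasureOnCompacts μ] {p : ℝ[X]} {s : Set ℝ}

theorem integrableOn_eval (p : ℝ[X]) (hs : IsCompact s) : IntegrableOn (fun x => p.eval x) s μ :=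
  p.continuous.continuousOn.integrableOn_compact hs

theorem setIntegral_eval_ne_zero_of_nonneg (hs : IsCompact s)
    (hpos : 0 < ∫ x in s, p.eval x ^ 2 ∂μ) (hnonneg : ∀ x ∈ s, 0 ≤ p.eval x) :
    ∫ x in s, p.eval x ∂μ ≠ 0 := by
  obtain ⟨B, hB⟩ := hs.exists_bound_of_continuousOn p.continuous.continuousOn
  have hle : ∫ x in s, p.eval x ^ 2 ∂μ ≤ B * ∫ x in s, p.eval x ∂μ := by
    rw [← integral_const_mul]
    refine setIntegral_mono_on ((p.continuous.pow 2).continuousOn.integrableOn_compact hs)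
      ((integrableOn_eval p hs).const_mul B) hs.measurableSet fun x hx => ?_
    rw [sq]
    exact mul_le_mul_of_nonneg_right ((le_abs_self _).trans (hB x hx)) (hnonneg x hx)
  intro hzero
  rw [hzero, mul_zero] at hle
  exact hpos.not_ge hle

theorem setIntegral_eval_ne_zero_of_nonneg_or_nonpos (hs : IsCompact s)
    (hpos : 0 < ∫ x in s, p.eval x ^ 2 ∂μ)
    (hsign : (∀ x ∈ s, 0 ≤ p.eval x) ∨ ∀ x ∈ s, p.eval x ≤ 0) :
    ∫ x in s, p.eval x ∂μ ≠ 0 := by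
  rcases hsign with hnonneg | hnonpos
  · exact setIntegral_eval_ne_zero_of_nonneg hs hpos hnonneg
  · have hneg := setIntegral_eval_ne_zero_of_nonneg (μ := μ) (p := -p) hs
      (by simpa only [eval_neg, neg_sq] using hpos)
      (fun x hx => by simpa only [eval_neg, Left.nonneg_neg_iff] using hnonpos x hx)
    simpa only [eval_neg, integral_neg, neg_ne_zero] using hneg

theorem le_card_oddRoots_of_orthogonal {a b : ℝ} (hab : a < b)
    (hμ : ∀ q : ℝ[X], q ≠ 0 → 0 < ∫ x in Set.Icc a b, q.eval x ^ 2 ∂μ) (hp : p ≠ 0) {k : ℕ}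
    (horth : ∀ f : ℝ[X], f.degree < k → ∫ x in Set.Icc a b, (f * p).eval x ∂μ = 0) :
    k ≤ (oddRoots p (Set.Ioo a b)).card := by
  by_contra! hcard
  set Q := ∏ t ∈ oddRoots p (Set.Ioo a b), (X - C t)
  have hQ : Q.Monic := monic_prod_X_sub_C _ _
  have hQ_deg : Q.degree < k := by
    rw [degree_eq_natDegree hQ.ne_zero, natDegree_finsetProd_X_sub_C_eq_card]
    exact_mod_cast hcard
  have hsign := eval_nonneg_or_nonpos_closure <|
    eval_nonneg_or_nonpos_of_even_rootMultiplicity isPreconnected_Ioo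
      fun t ht => even_rootMultiplicity_prod_oddRoots_mul (p := p) (s := Set.Ioo a b) hp ht
  rw [closure_Ioo hab.ne] at hsign
  exact setIntegral_eval_ne_zero_of_nonneg_or_nonpos isCompact_Icc
    (hμ _ (mul_ne_zero hQ.ne_zero hp)) hsign (horth Q hQ_deg)

end Orthogonality

section MassPolynomial

variable {R ι : Type*} [CommRing R] [Fintype ι] {c : ι → R} {d : ι → ℕ}

/-- The monic polynomial vanishing at each mass point `c j` to order `d j + 1`. When all `c j` lie
outside `[-1, 1]` it is `rhoPoly c d` up to sign. -/
def massPoly (c : ι → R) (d : ι → ℕ) : R[X] :=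
  ∏ j, (X - C (c j)) ^ (d j + 1)

theorem monic_massPoly (c : ι → R) (d : ι → ℕ) : (massPoly c d).Monic :=
  monic_prod_of_monic _ _ fun _ _ => (monic_X_sub_C _).pow _

theorem natDegree_massPoly [Nontrivial R] (c : ι → R) (d : ι → ℕ) :
    (massPoly c d).natDegree = Fintype.card ι + ∑ j, d j := by
  rw [massPoly, natDegree_prod_of_monic _ _ fun _ _ => (monic_X_sub_C _).pow _]
  simp [(monic_X_sub_C _).natDegree_pow, Finset.sum_add_distrib, add_comm]

theorem not_isRoot_massPoly [IsDomain R] {x : R} (hx : ∀ j, c j ≠ x) :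
    ¬ (massPoly c d).IsRoot x := by
  rw [IsRoot.def, massPoly, eval_prod, Finset.prod_eq_zero_iff]
  rintro ⟨j, -, hj⟩
  rw [eval_pow, eval_sub, eval_X, eval_C] at hj
  exact hx j (sub_eq_zero.1 (eq_zero_of_pow_eq_zero hj)).symm

theorem eval_iterate_derivative_eq_zero_of_pow_dvd {f : R[X]} {a : R} {m i : ℕ}
    (hdvd : (X - C a) ^ m ∣ f) (hi : i < m) : (derivative^[i] f).eval a = 0 :=
  dvd_iff_isRoot.1 <| (dvd_pow_self _ (Nat.sub_ne_zero_of_lt hi)).trans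
    (pow_sub_dvd_iterate_derivative_of_pow_dvd i hdvd)

end MassPolynomial

theorem map_eq_zero_of_forall_map_X_pow_eq_zero {R M : Type*} [Semiring R] [AddCommMonoid M]
    [Module R M] (L : R[X] →ₗ[R] M) {n : ℕ} (hL : ∀ m < n, L (X ^ m) = 0) {f : R[X]}
    (hf : f.degree < n) : L f = 0 := by
  have hle : degreeLT R n ≤ LinearMap.ker L := by
    rw [degreeLT_eq_span_X_pow, Submodule.span_le]
    intro g hg
    obtain ⟨m, hm, rfl⟩ := Finset.mem_image.1 hg
    exact hL m (Finset.mem_range.1 hm)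
  exact hle (mem_degreeLT.2 hf)

section Sobolev

variable (μ : Measure ℝ) {N : ℕ} (c : Fin N → ℝ) (d : Fin N → ℕ) (η : Fin N → ℕ → ℝ)

theorem isLinearMap_sobInner2_left [IsFiniteMeasureOnCompacts μ] (g : ℝ[X]) :
    IsLinearMap ℝ fun f => sobInner2 μ c d η f g where
  map_add f₁ f₂ := by
    have hint (f : ℝ[X]) :
        IntegrableOn (fun x => f.eval x * g.eval x) (Set.Icc (-1 : ℝ) 1) μ := by
      simpa only [eval_mul] using integrableOn_eval (f * g) isCompact_Icc
    simp only [sobInner2, eval_add, add_mul, iterate_map_add, mul_add, Finset.sum_add_distrib]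
    rw [integral_add (hint f₁) (hint f₂)]
    ring
  map_smul a f := by
    simp only [sobInner2, eval_smul, iterate_derivative_smul, smul_eq_mul, mul_add, Finset.mul_sum,
      mul_assoc, mul_left_comm _ a, integral_const_mul]

theorem sobInner2_massPoly_mul (f g : ℝ[X]) :
    sobInner2 μ c d η (massPoly c d * f) g =
      ∫ x in Set.Icc (-1 : ℝ) 1, (f * (massPoly c d * g)).eval x ∂μ := by
  have hdvd (j : Fin N) : (X - C (c j)) ^ (d j + 1) ∣ massPoly c d * f :=
    (Finset.dvd_prod_of_mem _ (Finset.mem_univ j)).mul_right f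
  have hmass : ∑ j, ∑ i ∈ Finset.range (d j + 1), η j i *
      (derivative^[i] (massPoly c d * f)).eval (c j) * (derivative^[i] g).eval (c j) = 0 :=
    Finset.sum_eq_zero fun j _ => Finset.sum_eq_zero fun i hi => by
      rw [eval_iterate_derivative_eq_zero_of_pow_dvd (hdvd j) (Finset.mem_range.1 hi),
        mul_zero, zero_mul]
  rw [sobInner2, hmass, add_zero]
  simp only [← eval_mul]
  congr! 3
  ring

variable {μ c d η}

theorem setIntegral_mul_massPoly_mul_eq_zero [IsFiniteMeasureOnCompacts μ] {p f : ℝ[X]} {n : ℕ}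
    (horth : ∀ m < n, sobInner2 μ c d η (X ^ m) p = 0)
    (hf : f.degree < (n - (N + ∑ j, d j) : ℕ)) :
    ∫ x in Set.Icc (-1 : ℝ) 1, (f * (massPoly c d * p)).eval x ∂μ = 0 := by
  rcases eq_or_ne f 0 with rfl | hf0
  · simp
  rw [← sobInner2_massPoly_mul μ c d η]
  refine map_eq_zero_of_forall_map_X_pow_eq_zero
    ((isLinearMap_sobInner2_left μ c d η p).mk' _) horth ?_
  have hρ := (monic_massPoly c d).ne_zero
  rw [degree_eq_natDegree hf0, Nat.cast_lt] at hf
  rw [degree_eq_natDegree (mul_ne_zero hρ hf0), Nat.cast_lt, natDegree_mul hρ hf0,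
    natDegree_massPoly, Fintype.card_fin]
  omega

theorem statement3_general [IsFiniteMeasureOnCompacts μ]
    (hμ : ∀ q : ℝ[X], q ≠ 0 → 0 < ∫ x in Set.Icc (-1 : ℝ) 1, q.eval x ^ 2 ∂μ)
    (hc : ∀ j, c j ∉ Set.Ioo (-1 : ℝ) 1) {p : ℝ[X]} (hp : p ≠ 0) {n : ℕ}
    (horth : ∀ m < n, sobInner2 μ c d η (X ^ m) p = 0) :
    ∃ T : Finset ℝ, n - (N + ∑ j, d j) ≤ T.card ∧
      ∀ t ∈ T, t ∈ Set.Ioo (-1 : ℝ) 1 ∧ SignChangeAt p t := by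
  have hroots : oddRoots (massPoly c d * p) (Set.Ioo (-1) 1) = oddRoots p (Set.Ioo (-1) 1) :=
    oddRoots_mul_of_forall_not_isRoot hp fun t ht =>
      not_isRoot_massPoly fun j hj => hc j (hj ▸ ht)
  refine ⟨oddRoots p (Set.Ioo (-1) 1), ?_, fun t ht => ?_⟩
  · rw [← hroots]
    exact le_card_oddRoots_of_orthogonal (by norm_num) hμ
      (mul_ne_zero (monic_massPoly c d).ne_zero hp)
      fun f hf => setIntegral_mul_massPoly_mul_eq_zero horth hf
  · obtain ⟨ht_mem, ht_odd⟩ := mem_oddRoots.1 ht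
    exact ⟨ht_mem, signChangeAt_of_odd_rootMultiplicity ht_odd⟩

end Sobolev

/-- If `n > d`, where `d = N + ∑ d j` is the degree of `ρ`, then the
Sobolev orthogonal polynomial `S n` has at least `n - d` changes of sign on `(-1,1)`. -/
theorem statement3
    (μ : Measure ℝ) [IsFiniteMeasure μ]
    (hμsupp : μ (Set.Icc (-1:ℝ) 1)ᶜ = 0)
    (hμinf : ∀ p : Polynomial ℝ, p ≠ 0 → 0 < ∫ x in Set.Icc (-1:ℝ) 1, (p.eval x) ^ 2 ∂μ)
    {N : ℕ} (c : Fin N → ℝ) (d : Fin N → ℕ)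
    (hc : ∀ j, c j ∉ Set.Icc (-1:ℝ) 1)
    (η : Fin N → ℕ → ℝ) (hη : ∀ j i, i ≤ d j → 0 ≤ η j i) (hηd : ∀ j, 0 < η j (d j))
    (S : ℕ → Polynomial ℝ)
    (hSmonic : ∀ n, (S n).Monic) (hSdeg : ∀ n, (S n).natDegree = n)
    (hSorth : ∀ n, ∀ m < n, sobInner2 μ c d η (X ^ m) (S n) = 0)
    (n : ℕ) (hn : N + ∑ j, d j < n) :
    ∃ T : Finset ℝ, n - (N + ∑ j, d j) ≤ T.card ∧
      ∀ t ∈ T, t ∈ Set.Ioo (-1:ℝ) 1 ∧ SignChangeAt (S n) t :=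
  statement3_general hμinf (fun j hj => hc j (Set.Ioo_subset_Icc_self hj)) (hSmonic n).ne_zero
    (hSorth n)

end
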